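/- Let μ > 0, ε > 0, and define on ℝ³ × (ℝ³∖{0}) the regularized Kepler Hamiltonian G̃(x, p) = (1/(2ε))(ε² + |x|²)|p| − μ/ε. Let (x, p) : I → ℝ³ × (ℝ³∖{0}) be a C¹ solution of Hamilton's equations x'(t) = ∇_p G̃(x(t), p(t)) = (ε² + |x(t)|²) p(t)/(2ε|p(t)|) and p'(t) = −∇_x G̃(x(t), p(t)) = −(|p(t)|/ε) x(t) on an open interval I, and suppose G̃(x(t), p(t)) = 0 for all t ∈ I. Then the momentum satisfies p''(t) = (⟨p(t), p'(t)⟩/|p(t)|²) p'(t) − (μ/(ε²|p(t)|)) p(t) for all t ∈ I; this is the flow of the Kepler problem in momentum space parametrized by the eccentric anomaly. -/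

import Mathlib

open scoped RealInnerProductSpace

/-!
On the zero level set `‖p‖ = 2μ / (ε² + ‖x‖²)`, so Hamilton's second equation reads
`p' = -(1/ε) • (2μ / (ε² + ‖x‖²)) • x`, whose right-hand side depends on `x` alone, and the first
one reads `x' = (μ / (ε ‖p‖²)) • p`. Differentiating by the product rule gives
`p'' = (⟪x, p⟫ / ε²) • x - (μ / (ε² ‖p‖)) • p`, and `x = -(ε / ‖p‖) • p'` turns the first term into
`(⟪p, p'⟫ / ‖p‖²) • p'`.

The curves are not assumed differentiable. For `x` this follows from `deriv x t ≠ 0`, since `deriv`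
vanishes at points of non-differentiability. For `p` this argument fails where `x t = 0`, but
differentiability of `p` is never needed: `‖p‖` is expressed through `x`.
-/

/-- **Regularized Kepler flow in momentum space.** For the regularized Kepler
Hamiltonian `G̃(x,p) = (1/(2ε))(ε² + |x|²)|p| - μ/ε`, any solution of Hamilton's
equations `x' = (ε² + |x|²)p/(2ε|p|)`, `p' = -(|p|/ε)x` on the zero level set
`G̃ = 0` satisfies `p'' = (⟨p, p'⟩/|p|²)p' - (μ/(ε²|p|))p`: the Kepler flow in
momentum space parametrized by the eccentric anomaly. -/
theorem regularized_kepler_momentum_flow (μ ε : ℝ) (hμ : 0 < μ) (hε : 0 < ε)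
    (a b : ℝ) (x p : ℝ → EuclideanSpace ℝ (Fin 3))
    (hp0 : ∀ t ∈ Set.Ioo a b, p t ≠ 0)
    (Gtil : EuclideanSpace ℝ (Fin 3) → EuclideanSpace ℝ (Fin 3) → ℝ)
    (hGtil : ∀ X P, Gtil X P = (1 / (2 * ε)) * (ε^2 + ‖X‖^2) * ‖P‖ - μ / ε)
    (hx' : ∀ t ∈ Set.Ioo a b,
      deriv x t = ((ε^2 + ‖x t‖^2) / (2 * ε * ‖p t‖)) • p t)
    (hp' : ∀ t ∈ Set.Ioo a b, deriv p t = -((‖p t‖ / ε) • x t))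
    (hzero : ∀ t ∈ Set.Ioo a b, Gtil (x t) (p t) = 0) :
    ∀ t ∈ Set.Ioo a b,
      deriv (deriv p) t =
        (⟪p t, deriv p t⟫ / ‖p t‖^2) • deriv p t
          - (μ / (ε^2 * ‖p t‖)) • p t := by
  intro t ht
  -- `‖p‖` as a function of `x` on the level set
  have key : ∀ s ∈ Set.Ioo a b, ‖p s‖ = 2 * μ / (ε^2 + ‖x s‖^2) := by
    intro s hs
    have h := hzero s hs
    rw [hGtil] at h
    have hpos : 0 < ε^2 + ‖x s‖^2 := by positivity
    field_simp at h ⊢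
    linarith
  have hn : 0 < ‖p t‖ := norm_pos_iff.mpr (hp0 t ht)
  have hpos : 0 < ε^2 + ‖x t‖^2 := by positivity
  have hk := key t ht
  have hS : ε^2 + ‖x t‖^2 = 2 * μ / ‖p t‖ := by rw [hk]; field_simp
  -- `deriv x t ≠ 0` rules out the junk value of `deriv`
  have hdx : DifferentiableAt ℝ x t := by
    by_contra hnd
    have h0 := hx' t ht
    rw [deriv_zero_of_not_differentiableAt hnd] at h0
    have hc : (ε^2 + ‖x t‖^2) / (2 * ε * ‖p t‖) ≠ 0 := by positivity
    exact smul_ne_zero hc (hp0 t ht) h0.symm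
  have hx : HasDerivAt x ((μ / (ε * ‖p t‖^2)) • p t) t := by
    have h := hdx.hasDerivAt
    rw [hx' t ht] at h
    refine h.congr_deriv ?_
    rw [hS]
    congr 1
    field_simp
  have heq : deriv p =ᶠ[nhds t] fun s => -((2 * μ / (ε^2 + ‖x s‖^2) / ε) • x s) := by
    filter_upwards [Ioo_mem_nhds ht.1 ht.2] with s hs
    rw [hp' s hs, key s hs]
  have hsc : HasDerivAt (fun s => 2 * μ / (ε^2 + ‖x s‖^2) / ε) (-(⟪x t, p t⟫ / ε^2)) t := by
    have h := (((hasDerivAt_const t (2 * μ)).div (hx.norm_sq.const_add (ε^2)) hpos.ne').div_const ε)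
    refine h.congr_deriv ?_
    rw [hS, real_inner_smul_right]
    field_simp
    ring
  have hd : HasDerivAt (fun s => -((2 * μ / (ε^2 + ‖x s‖^2) / ε) • x s)) _ t :=
    (hsc.smul hx).neg
  rw [heq.deriv_eq, hd.deriv, hp' t ht, ← hk, inner_neg_right,
    real_inner_smul_right, real_inner_comm (x t) (p t)]
  match_scalars <;> field_simp
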